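/- Let M be a combinatorial model category with localization functor γ : M → Ho(M) to its homotopy category. Then there is a regular cardinal λ such that for every λ-presentable object X of M, the object γ(X) is λ-presentable with respect to coproducts in Ho(M): every morphism γ(X) → ∐_{i∈I} Y_i in Ho(M) factors through the subcoproduct ∐_{i∈J} Y_i for some subset J ⊆ I with |J| < λ. -/

import Mathlib

/-!
The cardinal `λ` is found as follows. Choose a regular cardinal `κ` such that `M` is locally
`κ`-presentable and the domains and codomains of generating cofibrations, and the domains of
generating trivial cofibrations, are `κ`-presentable. The small object argument in a functor
category, applied to the diagram of all `κ`-presentable objects `T` (up to isomorphism), yields a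
functorial cofibrant replacement `Q(T)` of these. Let `μ ≥ κ` be a cardinal such that all `Q(T)` are
`μ`-presentable, and put `λ = (2 ^ μ)⁺`.

* By the choice of `λ`, every subset of size `< λ` of a `κ`-directed poset is contained in a
  `κ`-directed subset of size `< λ` (`cofinalDirectedSub`). Hence a `λ`-presentable object `X` is a
  retract of a `κ`-directed colimit `X'` of size `< λ` of `κ`-presentable objects `T_b`
  (`exists_retract`).
* The colimit `Q` of the `Q(T_b)` is then `λ`-presentable, the map `Q ⟶ X'` is a trivial fibration
  since the generating cofibrations are maps between `κ`-presentable objects, and `Q` is cofibrant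
  (`exists_cover`). The last point holds because the diagram `T ↦ Q(T)` lifts against all pointwise
  trivial fibrations of diagrams, in particular against `T ↦ g ^ W(T)` for a trivial fibration `g` and
  the presheaf `W` given by the diagram of the `T_b` (`weighted_lift`, `exists_lift_colimit`).
* A coproduct in `Ho(M)` is the image of a coproduct `∐ K` of cofibrant objects (`isColimitCofan`),
  and `∐ K` is the `λ`-filtered colimit of the subcoproducts of size `< λ`. The diagram of
  subcoproducts has a fibrant replacement `R` which is a trivial cofibration pointwise and on colimits,
  again by `weighted_lift`; and `colim R` is fibrant because fibrant objects are the objects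
  injective with respect to maps with `κ`-presentable domains.
* A morphism `γ(X) ⟶ γ(∐ K)` thus extends along the retraction and the equivalences to
  `γ(Q) ⟶ γ(colim R)`, which is the image of a map `Q ⟶ colim R`, `Q` being cofibrant and `colim R`
  fibrant. Since `Q` is `λ`-presentable, that map factors through a stage `R_J`, which is weakly
  equivalent to the subcoproduct over `J` (`exists_factorization`). The retract `X` of `X'` inherits
  the factorization.
-/

universe w v u v₁ u₁ v₂ u₂

open CategoryTheory Limits Opposite

namespace Paper

variable {M : Type u} [Category.{v} M]

/-! ### Lifting properties, weak factorization systems -/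

/-- The class of morphisms with the right lifting property against a set of arrows. -/
def rlpSet (X : Set (Arrow M)) : MorphismProperty M :=
  fun _ _ f => ∀ a ∈ X, HasLiftingProperty a.hom f

/-- The right lifting property class of a class of morphisms. -/
def rlpC (L : MorphismProperty M) : MorphismProperty M :=
  fun _ _ f => ∀ ⦃A B : M⦄ (g : A ⟶ B), L g → HasLiftingProperty g f

/-- The left lifting property class of a class of morphisms. -/
def llpC (R : MorphismProperty M) : MorphismProperty M :=
  fun _ _ f => ∀ ⦃A B : M⦄ (g : A ⟶ B), R g → HasLiftingProperty f g

/-- A weak factorization system `(L, R)`. -/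
structure IsWFS (L R : MorphismProperty M) : Prop where
  rlp_eq : rlpC L = R
  llp_eq : llpC R = L
  factorization : ∀ ⦃A B : M⦄ (f : A ⟶ B),
    ∃ (Z : M) (i : A ⟶ Z) (p : Z ⟶ B), L i ∧ R p ∧ i ≫ p = f

/-! ### Posets, smooth and good diagrams -/

/-- `a` is the predecessor of `b`; equivalently `b` is isolated with predecessor `a`. -/
def IsSuccOf {P : Type w} [PartialOrder P] (a b : P) : Prop :=
  a < b ∧ ∀ c : P, c < b → c ≤ a

/-- A limit element of a good poset: not the least element and not isolated. -/
def IsLimitElem {P : Type w} [PartialOrder P] [OrderBot P] (b : P) : Prop :=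
  b ≠ ⊥ ∧ ¬ ∃ a : P, IsSuccOf a b

/-- A preorder is `κ`-directed if every subset of cardinality `< κ` has an upper bound. -/
def CardDirected (κ : Cardinal.{w}) (P : Type w) [Preorder P] : Prop :=
  ∀ s : Set P, Cardinal.mk s < κ → ∃ b : P, ∀ x ∈ s, x ≤ b

/-- A category is `κ`-filtered if every diagram indexed by a category with fewer
than `κ` morphisms admits a cocone. -/
def CardFiltered (κ : Cardinal.{v}) (J : Type u₁) [Category.{v₁} J] : Prop :=
  ∀ (A : Type v) [SmallCategory A], Cardinal.mk (Arrow A) < κ →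
    ∀ F : A ⥤ J, Nonempty (Cocone F)

section Smooth

variable {P : Type w} [PartialOrder P] (D : P ⥤ M)

/-- Restriction of a diagram to the initial segment `{y | y < b}`. -/
def restrictIio (b : P) : {y : P // y < b} ⥤ M :=
  Monotone.functor (f := fun y : {y : P // y < b} => (y : P)) (fun _ _ h => h) ⋙ D

/-- The canonical cocone on the restriction of `D` to `{y | y < b}` with point `D.obj b`. -/
def iioCocone (b : P) : Cocone (restrictIio D b) where
  pt := D.obj b
  ι :=
    { app := fun y => D.map (homOfLE y.2.le)
      naturality := fun y z f => by
        dsimp [restrictIio, Monotone.functor]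
        rw [Category.comp_id, ← D.map_comp]
        rfl }

/-- A diagram over a poset with a least element is smooth if at every limit element the
canonical cocone of the restriction to the strict initial segment is a colimit cocone. -/
def IsSmooth [OrderBot P] : Prop :=
  ∀ b : P, IsLimitElem b → Nonempty (IsColimit (iioCocone D b))

end Smooth

/-! ### Cellular morphisms and cofibrations -/

/-- `Q` contains the set of arrows `X`. -/
def ContainsX (X : Set (Arrow M)) (Q : MorphismProperty M) : Prop :=
  ∀ a ∈ X, Q a.hom

/-- `Q` is stable under pushouts of morphisms in `X` along arbitrary morphisms. -/
def StableUnderPushoutsOf (X : Set (Arrow M)) (Q : MorphismProperty M) : Prop :=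
  ∀ ⦃A B A' B' : M⦄ (u : A ⟶ A') (f : A ⟶ B) (g : A' ⟶ B') (v : B ⟶ B'),
    Arrow.mk f ∈ X → IsPushout u f g v → Q g

/-- `Q` is stable under transfinite compositions: for every smooth diagram over a
well-ordered set with least element, all of whose links lie in `Q`, the composite
(the component at `⊥` of any colimit cocone) lies in `Q`. -/
def StableUnderTransfiniteComposition (Q : MorphismProperty M) : Prop :=
  ∀ (β : Type v) [LinearOrder β] [OrderBot β], WellFoundedLT β →
    ∀ (D : β ⥤ M), IsSmooth D →
      (∀ (a b : β) (h : IsSuccOf a b), Q (D.map (homOfLE h.1.le))) →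
      ∀ (c : Cocone D), IsColimit c → Q (c.ι.app ⊥)

/-- `Q` is stable under retracts (in the arrow category). -/
def IsRetractOf {A B A' B' : M} (f : A ⟶ B) (g : A' ⟶ B') : Prop :=
  ∃ (iA : A ⟶ A') (rA : A' ⟶ A) (iB : B ⟶ B') (rB : B' ⟶ B),
    iA ≫ rA = 𝟙 A ∧ iB ≫ rB = 𝟙 B ∧ iA ≫ g = f ≫ iB ∧ rA ≫ f = g ≫ rB

def StableUnderRetracts (Q : MorphismProperty M) : Prop :=
  ∀ ⦃A B A' B' : M⦄ (f : A ⟶ B) (g : A' ⟶ B'), IsRetractOf f g → Q g → Q f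

/-- `Q` contains `X` and is closed under pushouts along `X` and transfinite compositions. -/
def IsCellClosed (X : Set (Arrow M)) (Q : MorphismProperty M) : Prop :=
  ContainsX X Q ∧ StableUnderPushoutsOf X Q ∧ StableUnderTransfiniteComposition Q

/-- The class of `X`-cellular morphisms: the smallest class containing `X` closed under
pushouts along morphisms of `X` and transfinite compositions. -/
def cellP (X : Set (Arrow M)) : MorphismProperty M :=
  fun _ _ f => ∀ Q : MorphismProperty M, IsCellClosed X Q → Q f

/-- The class of `X`-cofibrations: the smallest class containing `X` closed under
pushouts along morphisms of `X`, transfinite compositions and retracts. -/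
def cofP (X : Set (Arrow M)) : MorphismProperty M :=
  fun _ _ f => ∀ Q : MorphismProperty M, IsCellClosed X Q → StableUnderRetracts Q → Q f

/-! ### Smallness and presentability -/

/-- `Hom(A, -)` maps the colimit cocone `c` to a colimit cocone in types. -/
def CoyonedaPreserves (A : M) {J : Type u₁} [Category.{v₁} J] (D : J ⥤ M) (c : Cocone D) :
    Prop :=
  Nonempty (IsColimit ((coyoneda.obj (op A)).mapCocone c))

/-- `A` is `κ`-small relative to `X`: `Hom(A, -)` preserves colimits of smooth κ-directed
well-ordered chains whose links are `X`-cellular. -/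
def SmallRel (κ : Cardinal.{v}) (X : Set (Arrow M)) (A : M) : Prop :=
  ∀ (P : Type v) [LinearOrder P] [OrderBot P], WellFoundedLT P → CardDirected κ P →
    ∀ (D : P ⥤ M), IsSmooth D →
      (∀ (a b : P) (h : IsSuccOf a b), cellP X (D.map (homOfLE h.1.le))) →
      ∀ (c : Cocone D), IsColimit c → CoyonedaPreserves A D c

/-- `A` is strictly `κ`-small relative to `X`: `Hom(A, -)` preserves colimits of κ-directed
good (smooth, well-founded with bottom) diagrams whose links are `X`-cellular. -/
def StrictlySmallRel (κ : Cardinal.{v}) (X : Set (Arrow M)) (A : M) : Prop :=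
  ∀ (P : Type v) [PartialOrder P] [OrderBot P], WellFoundedLT P → CardDirected κ P →
    ∀ (D : P ⥤ M), IsSmooth D →
      (∀ (a b : P) (h : IsSuccOf a b), cellP X (D.map (homOfLE h.1.le))) →
      ∀ (c : Cocone D), IsColimit c → CoyonedaPreserves A D c

/-- `A` is `κ`-presentable: `Hom(A, -)` preserves `κ`-filtered colimits. -/
def IsCardinalPresentable (κ : Cardinal.{v}) (A : M) : Prop :=
  ∀ (J : Type v) [SmallCategory J], CardFiltered κ J →
    ∀ (D : J ⥤ M) (c : Cocone D), IsColimit c → CoyonedaPreserves A D c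

/-- `A` is presentable: `κ`-presentable for some regular cardinal `κ`. -/
def IsPresentableObj (A : M) : Prop :=
  ∃ κ : Cardinal.{v}, κ.IsRegular ∧ IsCardinalPresentable κ A

/-! ### Notions of cofibrant generation -/

/-- `X` is a (small) generating set: `X ⊆ L` and `X^□ = R`. -/
structure IsGeneratingSet (L R : MorphismProperty M) (X : Set (Arrow M)) : Prop where
  small : Small.{v} X
  subset : ∀ a ∈ X, L a.hom
  rlp : rlpSet X = R

def SetwiseCofGen (L R : MorphismProperty M) : Prop :=
  ∃ X : Set (Arrow M), IsGeneratingSet L R X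

def WeaklyCofGenBy (L R : MorphismProperty M) (X : Set (Arrow M)) : Prop :=
  IsGeneratingSet L R X ∧ cofP X = L

def CofGenBy (L R : MorphismProperty M) (X : Set (Arrow M)) (κ : Cardinal.{v}) : Prop :=
  IsGeneratingSet L R X ∧ ∀ a ∈ X, SmallRel κ X a.left

def StrictlyCofGenBy (L R : MorphismProperty M) (X : Set (Arrow M)) (κ : Cardinal.{v}) : Prop :=
  IsGeneratingSet L R X ∧ ∀ a ∈ X, StrictlySmallRel κ X a.left

def SemiPerfectlyCofGenBy (L R : MorphismProperty M) (X : Set (Arrow M)) (κ : Cardinal.{v}) :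
    Prop :=
  IsGeneratingSet L R X ∧ ∀ a ∈ X, IsCardinalPresentable κ a.left

def PerfectlyCofGenBy (L R : MorphismProperty M) (X : Set (Arrow M)) (κ : Cardinal.{v}) : Prop :=
  SemiPerfectlyCofGenBy L R X κ ∧ ∀ a ∈ X, IsCardinalPresentable κ a.right

def CofGen (L R : MorphismProperty M) : Prop :=
  ∃ (X : Set (Arrow M)) (κ : Cardinal.{v}), κ.IsRegular ∧ CofGenBy L R X κ

def StrictlyCofGen (L R : MorphismProperty M) : Prop :=
  ∃ (X : Set (Arrow M)) (κ : Cardinal.{v}), κ.IsRegular ∧ StrictlyCofGenBy L R X κ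

def SemiPerfectlyCofGen (L R : MorphismProperty M) : Prop :=
  ∃ (X : Set (Arrow M)) (κ : Cardinal.{v}), κ.IsRegular ∧ SemiPerfectlyCofGenBy L R X κ

def PerfectlyCofGen (L R : MorphismProperty M) : Prop :=
  ∃ (X : Set (Arrow M)) (κ : Cardinal.{v}), κ.IsRegular ∧ PerfectlyCofGenBy L R X κ

/-! ### Cofibrant objects -/

/-- `A` is `L`-cofibrant: the morphism from an initial object to `A` lies in `L`. -/
def CofibrantObj (L : MorphismProperty M) (A : M) : Prop :=
  ∀ ⦃I : M⦄ (hI : IsInitial I), L (hI.to A)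

/-- `A` is `R`-fibrant: the morphism from `A` to a terminal object lies in `R`. -/
def FibrantObj (R : MorphismProperty M) (A : M) : Prop :=
  ∀ ⦃T : M⦄ (hT : IsTerminal T), R (hT.from A)

/-- A set of objects closed under `λ`-small colimits (diagrams with fewer than `λ` morphisms). -/
def ClosedUnderColimitsCard (lam : Cardinal.{v}) (S : Set M) : Prop :=
  ∀ (J : Type v) [SmallCategory J], Cardinal.mk (Arrow J) < lam →
    ∀ (D : J ⥤ M) (c : Cocone D), IsColimit c → (∀ j, D.obj j ∈ S) → c.pt ∈ S

/-- The smallest class of objects containing the domains and codomains of `X` and closed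
under `λ`-small colimits in `M`. -/
def Atilde (X : Set (Arrow M)) (lam : Cardinal.{v}) : Set M :=
  { m | ∀ S : Set M, (∀ a ∈ X, a.left ∈ S ∧ a.right ∈ S) →
      ClosedUnderColimitsCard lam S → m ∈ S }

/-- `A(X, λ)`: the intersection of `Atilde X λ` with the cofibrant objects. -/
def Aset (L : MorphismProperty M) (X : Set (Arrow M)) (lam : Cardinal.{v}) : Set M :=
  { m | m ∈ Atilde X lam ∧ CofibrantObj L m }

/-- A set of objects is essentially small. -/
def EssentiallySmallSet (S : Set M) : Prop :=
  ∃ T : Set M, Small.{v} T ∧ T ⊆ S ∧ ∀ m ∈ S, ∃ t ∈ T, Nonempty (m ≅ t)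

/-- `A` is a `λ`-filtered colimit (in `M`) of objects from `S`. -/
def IsCardFilteredColimitOf (lam : Cardinal.{v}) (S : Set M) (A : M) : Prop :=
  ∃ J : Cat.{v, v}, CardFiltered lam J ∧
    ∃ D : J ⥤ M, (∀ j, D.obj j ∈ S) ∧ ∃ c : Cocone D, Nonempty (IsColimit c) ∧ c.pt = A

/-! ### Preaccessible and locally presentable categories -/

def PreaccessibleAt (lam : Cardinal.{v}) (C : Type u₁) [Category.{v} C] : Prop :=
  ∃ A : Set C, Small.{v} A ∧ (∀ a ∈ A, IsCardinalPresentable lam a) ∧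
    ∀ X : C, IsCardFilteredColimitOf lam A X

def Preaccessible (C : Type u₁) [Category.{v} C] : Prop :=
  ∃ lam : Cardinal.{v}, lam.IsRegular ∧ PreaccessibleAt lam C

def LocallyPresentable (C : Type u₁) [Category.{v} C] : Prop :=
  HasColimitsOfSize.{v, v} C ∧ Preaccessible C

/-! ### Vopěnka's principle -/

/-- A graph: a type with a binary relation. -/
structure Graph : Type (v + 1) where
  V : Type v
  E : V → V → Prop

/-- A homomorphism of graphs. -/
structure GraphHom (G H : Graph.{v}) : Type v where
  toFun : G.V → H.V
  map : ∀ {a b : G.V}, G.E a b → H.E (toFun a) (toFun b)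

/-- Vopěnka's principle: for every ordinal-indexed family of graphs there exist two distinct
indices and a homomorphism between the corresponding graphs; equivalently, the category of
graphs has no large discrete full subcategory. -/
def VopenkaPrinciple : Prop :=
  ∀ G : Ordinal.{v} → Graph.{v}, ∃ i j : Ordinal.{v}, i ≠ j ∧ Nonempty (GraphHom (G i) (G j))


/-! ### Model structures -/

/-- A functorial factorization of every morphism into a morphism in `L` followed by a
morphism in `R`. -/
structure FunctorialFactorizationData {C : Type u₁} [Category.{v₁} C]
    (L R : MorphismProperty C) where
  Z : Arrow C ⥤ C
  i : ∀ f : Arrow C, f.left ⟶ Z.obj f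
  p : ∀ f : Arrow C, Z.obj f ⟶ f.right
  fac : ∀ f : Arrow C, i f ≫ p f = f.hom
  hi : ∀ f : Arrow C, L (i f)
  hp : ∀ f : Arrow C, R (p f)
  nat_i : ∀ {f g : Arrow C} (φ : f ⟶ g), φ.left ≫ i g = i f ≫ Z.map φ
  nat_p : ∀ {f g : Arrow C} (φ : f ⟶ g), p f ≫ φ.right = Z.map φ ≫ p g

/-- A model structure on a category `C`: classes `Cof`, `W`, `Fib` such that `W` contains
the isomorphisms and satisfies 2-out-of-3, and `(Cof ⊓ W, Fib)` and `(Cof, W ⊓ Fib)` are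
weak factorization systems admitting functorial factorizations.  (Completeness and
cocompleteness of `C` are stated separately.) -/
structure ModelStructure (C : Type u₁) [Category.{v₁} C] where
  Cof : MorphismProperty C
  W : MorphismProperty C
  Fib : MorphismProperty C
  w_iso : ∀ ⦃A B : C⦄ (f : A ⟶ B), IsIso f → W f
  w_comp : ∀ ⦃A B E : C⦄ (f : A ⟶ B) (g : B ⟶ E), W f → W g → W (f ≫ g)
  w_cancel_left : ∀ ⦃A B E : C⦄ (f : A ⟶ B) (g : B ⟶ E), W f → W (f ≫ g) → W g
  w_cancel_right : ∀ ⦃A B E : C⦄ (f : A ⟶ B) (g : B ⟶ E), W g → W (f ≫ g) → W f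
  wfs₁ : IsWFS (Cof ⊓ W) Fib
  wfs₂ : IsWFS Cof (W ⊓ Fib)
  fac₁ : Nonempty (FunctorialFactorizationData (Cof ⊓ W) Fib)
  fac₂ : Nonempty (FunctorialFactorizationData Cof (W ⊓ Fib))

/-- A model structure is cofibrantly generated if both of its weak factorization systems
are cofibrantly generated. -/
def IsCofibrantlyGeneratedModel {C : Type u} [Category.{v} C] (σ : ModelStructure C) :
    Prop :=
  CofGen σ.Cof (σ.W ⊓ σ.Fib) ∧ CofGen (σ.Cof ⊓ σ.W) σ.Fib

/-- A combinatorial model structure: cofibrantly generated with locally presentable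
underlying category. -/
def IsCombinatorial {C : Type u} [Category.{v} C] (σ : ModelStructure C) : Prop :=
  LocallyPresentable C ∧ IsCofibrantlyGeneratedModel σ

/-! ### Comparison with the presentability notions of Mathlib -/

theorem isCardinalFiltered_of_cardFiltered {κ : Cardinal.{v}} [Fact κ.IsRegular]
    {J : Type u₁} [Category.{v₁} J] (h : CardFiltered κ J) : IsCardinalFiltered J κ where
  nonempty_cocone {A} _ F hA := h A (by rwa [hasCardinalLT_iff_cardinal_mk_lt] at hA) F

theorem cardFiltered_of_isCardinalFiltered {κ : Cardinal.{v}} [Fact κ.IsRegular]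
    (J : Type u₁) [Category.{v₁} J] [IsCardinalFiltered J κ] : CardFiltered κ J :=
  fun A _ hA F => IsCardinalFiltered.nonempty_cocone (κ := κ) F
    (by rwa [hasCardinalLT_iff_cardinal_mk_lt])

theorem isCardinalPresentable_iff_mathlib {κ : Cardinal.{v}} [Fact κ.IsRegular] (A : M) :
    IsCardinalPresentable κ A ↔ CategoryTheory.IsCardinalPresentable A κ := by
  constructor
  · intro h
    refine ⟨fun J _ hJ => ⟨fun {F} => ⟨fun {c} hc => ?_⟩⟩⟩
    exact h J (cardFiltered_of_isCardinalFiltered J) F c hc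
  · intro h J _ hJ D c hc
    have := isCardinalFiltered_of_cardFiltered hJ
    have := preservesColimitsOfShape_of_isCardinalPresentable A κ J
    exact ⟨isColimitOfPreserves _ hc⟩

/-- The generator by which a category is preaccessible is a cardinal filtered generator in the sense of
Mathlib. -/
theorem exists_isCardinalLocallyPresentable (h : LocallyPresentable M) :
    ∃ (κ : Cardinal.{v}) (_ : Fact κ.IsRegular), IsCardinalLocallyPresentable M κ := by
  obtain ⟨h₁, κ, hκ, S, hS, hS₁, hS₂⟩ := h
  have : Fact κ.IsRegular := ⟨hκ⟩
  refine ⟨κ, this, ?_⟩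
  have hgen : HasCardinalFilteredGenerator M κ :=
    { exists_generator := ⟨fun X => X ∈ S, by
          have : ObjectProperty.Small.{v} (fun X => X ∈ S) := hS
          infer_instance,
        { le_isCardinalPresentable := fun X hX => (isCardinalPresentable_iff_mathlib X).1 (hS₁ X hX)
          exists_colimitsOfShape := fun X => by
            obtain ⟨J, hJ, D, hD, c, ⟨hc⟩, rfl⟩ := hS₂ X
            exact ⟨J, inferInstance, isCardinalFiltered_of_cardFiltered hJ,
              ⟨⟨⟨D, c.ι, hc⟩, hD⟩⟩⟩ }⟩ }
  exact {}

/-! ### The small object argument in functor categories -/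

section FunctorFactorization

variable [HasColimitsOfSize.{v, v} M] (𝒞 : Type v) [SmallCategory 𝒞] (I : Set (Arrow M))

/-- The morphisms of `𝒞 ⥤ M` that generate the factorizations: the images of the arrows in `I`
under the left adjoints of all evaluation functors. -/
noncomputable def pwGen : MorphismProperty (𝒞 ⥤ M) :=
  MorphismProperty.ofHoms (fun (x : 𝒞 × I) => (evaluationLeftAdjoint M x.1).map x.2.1.hom)

theorem rlp_pwGen_iff {F G : 𝒞 ⥤ M} (f : F ⟶ G) :
    (pwGen 𝒞 I).rlp f ↔ ∀ c, rlpSet I (f.app c) := by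
  constructor
  · intro h c a ha
    exact ((evaluationAdjunctionRight M c).hasLiftingProperty_iff a.hom f).1
      (h _ (MorphismProperty.ofHoms.mk (⟨c, a, ha⟩ : 𝒞 × I)))
  · rintro h _ _ _ ⟨⟨c, a, ha⟩⟩
    exact ((evaluationAdjunctionRight M c).hasLiftingProperty_iff a.hom f).2 (h c a ha)

theorem pwGen_hasSmallObjectArgument [Small.{v} I] {κ : Cardinal.{v}} [Fact κ.IsRegular]
    (hI : ∀ a ∈ I, CategoryTheory.IsCardinalPresentable a.left κ) :
    MorphismProperty.HasSmallObjectArgument.{v} (pwGen 𝒞 I) := by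
  have : Nonempty κ.ord.ToType := by
    simpa using (Fact.out : κ.IsRegular).ne_zero
  have := WellFoundedLT.toOrderBot κ.ord.ToType
  refine ⟨κ, inferInstance, inferInstance, ?_⟩
  refine { isSmall := MorphismProperty.isSmall_ofHoms _, preservesColimit := ?_ }
  · rintro _ _ X Y _ ⟨⟨c, a, ha⟩⟩ f hf
    have := hI a ha
    have := (evaluationAdjunctionRight M c).isCardinalPresentable_leftAdjoint_obj κ a.left
    have := preservesColimitsOfShape_of_isCardinalPresentable ((evaluationLeftAdjoint M c).obj a.left) κ κ.ord.ToType
    infer_instance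

/-- Every map of diagrams factors as a map with the left lifting property against all
pointwise `I`-injective maps, followed by a pointwise `I`-injective map. -/
theorem exists_pw_factorization [Small.{v} I] {κ : Cardinal.{v}} [Fact κ.IsRegular]
    (hI : ∀ a ∈ I, CategoryTheory.IsCardinalPresentable a.left κ) {F G : 𝒞 ⥤ M} (φ : F ⟶ G) :
    ∃ (K : 𝒞 ⥤ M) (f : F ⟶ K) (p : K ⟶ G), f ≫ p = φ ∧ (∀ c, rlpSet I (p.app c)) ∧
      (pwGen 𝒞 I).rlp.llp f := by
  have := pwGen_hasSmallObjectArgument 𝒞 I hI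
  let d := MorphismProperty.factorizationData (pwGen 𝒞 I).rlp.llp (pwGen 𝒞 I).rlp φ
  exact ⟨d.Z, d.i, d.p, d.fac, (rlp_pwGen_iff 𝒞 I _).1 d.hp, d.hi⟩

end FunctorFactorization

/-! ### Lifting against a weight -/

section Weighted

variable [HasLimitsOfSize.{v, v} M]
  {𝒞 : Type v} [SmallCategory 𝒞] {I : Set (Arrow M)}

/-- A presheaf of sets on `𝒞`, in unbundled form. -/
structure Weight (𝒞 : Type v) [SmallCategory 𝒞] where
  obj : 𝒞 → Type v
  act : ∀ {T T' : 𝒞}, (T ⟶ T') → obj T' → obj T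
  act_id : ∀ {T : 𝒞} (w : obj T), act (𝟙 T) w = w
  act_comp : ∀ {T T' T'' : 𝒞} (a : T ⟶ T') (b : T' ⟶ T'') (w : obj T''),
    act (a ≫ b) w = act a (act b w)

/-- The diagram `T ↦ Z ^ (W T)`. -/
noncomputable def Weight.pow (W : Weight 𝒞) (Z : M) : 𝒞 ⥤ M where
  obj T := ∏ᶜ (fun _ : W.obj T => Z)
  map u := Pi.lift (fun w => Pi.π (fun _ => Z) (W.act u w))
  map_id T := by
    apply Limits.Pi.hom_ext
    intro w
    simp [W.act_id]
  map_comp a b := by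
    apply Limits.Pi.hom_ext
    intro w
    simp [W.act_comp]

/-- The projections of the powers `Z ^ (W T)`. -/
noncomputable def Weight.powπ (W : Weight 𝒞) (Z : M) {T : 𝒞} (w : W.obj T) : (W.pow Z).obj T ⟶ Z :=
  Pi.π (fun _ : W.obj T => Z) w

/-- The map to `Z ^ (W T)` with components `α`. -/
noncomputable def Weight.powLift (W : Weight 𝒞) {Z A : M} {T : 𝒞} (α : W.obj T → (A ⟶ Z)) :
    A ⟶ (W.pow Z).obj T :=
  Pi.lift α

@[simp]
theorem Weight.powLift_π (W : Weight 𝒞) {Z A : M} {T : 𝒞} (α : W.obj T → (A ⟶ Z)) (w : W.obj T) :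
    W.powLift α ≫ W.powπ Z w = α w :=
  Pi.lift_π α w

theorem Weight.pow_hom_ext (W : Weight 𝒞) {Z A : M} {T : 𝒞} {x y : A ⟶ (W.pow Z).obj T}
    (h : ∀ w, x ≫ W.powπ Z w = y ≫ W.powπ Z w) : x = y :=
  Limits.Pi.hom_ext _ _ h

theorem Weight.pow_map_π (W : Weight 𝒞) (Z : M) {T T' : 𝒞} (u : T ⟶ T') (w : W.obj T') :
    (W.pow Z).map u ≫ W.powπ Z w = W.powπ Z (W.act u w) :=
  Pi.lift_π _ w

/-- The map of diagrams `T ↦ g ^ (W T)`. -/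
noncomputable def Weight.powMap (W : Weight 𝒞) {Z Z' : M} (g : Z ⟶ Z') : W.pow Z ⟶ W.pow Z' where
  app T := W.powLift (fun w => W.powπ Z w ≫ g)
  naturality T T' u := by
    apply W.pow_hom_ext
    intro w
    simp only [Category.assoc, W.powLift_π, W.pow_map_π]
    rw [← Category.assoc, W.pow_map_π]

theorem Weight.powMap_π (W : Weight 𝒞) {Z Z' : M} (g : Z ⟶ Z') {T : 𝒞} (w : W.obj T) :
    (W.powMap g).app T ≫ W.powπ Z' w = W.powπ Z w ≫ g :=
  W.powLift_π _ w

theorem rlpSet_powMap (W : Weight 𝒞) {Z Z' : M} (g : Z ⟶ Z') (hg : rlpSet I g) (T : 𝒞) :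
    rlpSet I ((W.powMap g).app T) := by
  intro a ha
  have := hg a ha
  refine ⟨fun {s t} sq => ?_⟩
  have sq' (w : W.obj T) : CommSq (s ≫ W.powπ Z w) a.hom g (t ≫ W.powπ Z' w) := by
    refine ⟨?_⟩
    rw [Category.assoc, ← W.powMap_π, ← Category.assoc, sq.w, Category.assoc]
  refine ⟨⟨⟨W.powLift (fun w => (sq' w).lift), ?_, ?_⟩⟩⟩
  · apply W.pow_hom_ext
    intro w
    simp
  · apply W.pow_hom_ext
    intro w
    rw [Category.assoc, W.powMap_π, ← Category.assoc, W.powLift_π, (sq' w).fac_right]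

/-- A weighted cocone with vertex `Z` on the diagram `F`. -/
def Weight.IsNat (W : Weight 𝒞) (F : 𝒞 ⥤ M) {Z : M} (α : ∀ T, W.obj T → (F.obj T ⟶ Z)) : Prop :=
  ∀ ⦃T T' : 𝒞⦄ (u : T ⟶ T') (w : W.obj T'), F.map u ≫ α T' w = α T (W.act u w)

variable [HasColimitsOfSize.{v, v} M]

/-- A map of diagrams lifting against pointwise `I`-injective maps also lifts on weighted cocones
against any `I`-injective map `g`: lift against `T ↦ g ^ (W T)`. -/
theorem weighted_lift {F G : 𝒞 ⥤ M} (f : F ⟶ G) (hf : (pwGen 𝒞 I).rlp.llp f)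
    {Z Z' : M} (g : Z ⟶ Z') (hg : rlpSet I g) (W : Weight 𝒞)
    (α : ∀ T, W.obj T → (F.obj T ⟶ Z)) (hα : W.IsNat F α)
    (β : ∀ T, W.obj T → (G.obj T ⟶ Z')) (hβ : W.IsNat G β)
    (h : ∀ T w, α T w ≫ g = f.app T ≫ β T w) :
    ∃ ψ : ∀ T, W.obj T → (G.obj T ⟶ Z), W.IsNat G ψ ∧
      (∀ T w, f.app T ≫ ψ T w = α T w) ∧ ∀ T w, ψ T w ≫ g = β T w := by
  have := hf _ ((rlp_pwGen_iff 𝒞 I _).2 (rlpSet_powMap W g hg))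
  let s : F ⟶ W.pow Z :=
    { app T := W.powLift (α T)
      naturality T T' u := by
        apply W.pow_hom_ext
        intro w
        rw [Category.assoc, Category.assoc, W.powLift_π, W.pow_map_π, W.powLift_π, hα u w] }
  let t : G ⟶ W.pow Z' :=
    { app T := W.powLift (β T)
      naturality T T' u := by
        apply W.pow_hom_ext
        intro w
        rw [Category.assoc, Category.assoc, W.powLift_π, W.pow_map_π, W.powLift_π, hβ u w] }
  have hs (T) (w) : s.app T ≫ W.powπ Z w = α T w := W.powLift_π _ w
  have ht (T) (w) : t.app T ≫ W.powπ Z' w = β T w := W.powLift_π _ w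
  have sq : CommSq s f (W.powMap g) t := by
    refine ⟨?_⟩
    ext T
    apply W.pow_hom_ext
    intro w
    rw [NatTrans.comp_app, NatTrans.comp_app, Category.assoc, Category.assoc, W.powMap_π, ht,
      ← Category.assoc, hs, h]
  refine ⟨fun T w => sq.lift.app T ≫ W.powπ Z w, ?_, ?_, ?_⟩
  · intro T T' u w
    dsimp only
    rw [← Category.assoc, sq.lift.naturality, Category.assoc, W.pow_map_π]
  · intro T w
    dsimp only
    rw [← Category.assoc, ← NatTrans.comp_app, sq.fac_left, hs]
  · intro T w
    rw [Category.assoc, ← W.powMap_π, ← Category.assoc, ← NatTrans.comp_app, sq.fac_right, ht]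

/-- The colimit of a map lifting against pointwise `I`-injective maps lifts against
`I`-injective maps. -/
theorem hasLiftingProperty_of_isColimit {F G : 𝒞 ⥤ M} (f : F ⟶ G) (hf : (pwGen 𝒞 I).rlp.llp f)
    {c : Cocone F} (hc : IsColimit c) {c' : Cocone G} (hc' : IsColimit c') (k : c.pt ⟶ c'.pt)
    (hk : ∀ T, c.ι.app T ≫ k = f.app T ≫ c'.ι.app T)
    {Z Z' : M} (g : Z ⟶ Z') (hg : rlpSet I g) : HasLiftingProperty k g := by
  refine ⟨fun {s t} sq => ?_⟩
  let W : Weight 𝒞 := ⟨fun _ => PUnit, fun _ w => w, fun _ => rfl, fun _ _ _ => rfl⟩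
  obtain ⟨ψ, h₁, h₂, h₃⟩ := weighted_lift f hf g hg W (fun T _ => c.ι.app T ≫ s)
    (fun T T' u w => by simp) (fun T _ => c'.ι.app T ≫ t) (fun T T' u w => by simp)
    (fun T _ => by simp [sq.w, reassoc_of% hk])
  let l : c'.pt ⟶ Z := hc'.desc ⟨Z, ⟨fun T => ψ T ⟨⟩, fun T T' u => by simpa using h₁ u ⟨⟩⟩⟩
  have hl (T) : c'.ι.app T ≫ l = ψ T ⟨⟩ := hc'.fac _ _
  refine ⟨⟨⟨l, hc.hom_ext fun T => ?_, hc'.hom_ext fun T => ?_⟩⟩⟩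
  · simp [reassoc_of% hk, hl, h₂]
  · simp [reassoc_of% hl, h₃]

/-- The components of a map lifting against pointwise `I`-injective maps lift against
`I`-injective maps. The weight is represented by the object `J`. -/
theorem hasLiftingProperty_app {F G : 𝒞 ⥤ M} (f : F ⟶ G) (hf : (pwGen 𝒞 I).rlp.llp f) (J : 𝒞)
    {Z Z' : M} (g : Z ⟶ Z') (hg : rlpSet I g) : HasLiftingProperty (f.app J) g := by
  refine ⟨fun {s t} sq => ?_⟩
  let W : Weight 𝒞 := ⟨fun T => T ⟶ J, fun u w => u ≫ w, fun _ => by simp, fun _ _ _ => by simp⟩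
  obtain ⟨ψ, h₁, h₂, h₃⟩ := weighted_lift f hf g hg W (fun T w => F.map w ≫ s)
    (fun T T' u w => by simp [W]) (fun T w => G.map w ≫ t) (fun T T' u w => by simp [W])
    (fun T w => by simp [sq.w])
  refine ⟨⟨⟨ψ J (𝟙 J), ?_, ?_⟩⟩⟩
  · simp [h₂]
  · simp [h₃]

/-- If a diagram `Q` on `𝒞` is cofibrant with respect to pointwise `I`-injective maps, then the
colimit of `d ⋙ Q` is cofibrant with respect to `I`-injective maps, for any diagram `d` in `𝒞`. The
weight is the colimit of the presheaves represented by the objects of `d`. -/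
theorem exists_lift_colimit {F Q : 𝒞 ⥤ M} (f : F ⟶ Q) (hf : (pwGen 𝒞 I).rlp.llp f)
    (hF : ∀ T, Nonempty (IsInitial (F.obj T)))
    {B : Type v} [SmallCategory B] (d : B ⥤ 𝒞) {c : Cocone (d ⋙ Q)} (hc : IsColimit c)
    {Z Z' : M} (g : Z ⟶ Z') (hg : rlpSet I g) (t : c.pt ⟶ Z') :
    ∃ l : c.pt ⟶ Z, l ≫ g = t := by
  let r (T : 𝒞) (x y : Σ b : B, (T ⟶ d.obj b)) : Prop :=
    ∃ u : x.1 ⟶ y.1, y.2 = x.2 ≫ d.map u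
  let W : Weight 𝒞 :=
    { obj := fun T => Quot (r T)
      act := fun {T T'} a => Quot.lift (fun x => Quot.mk (r T) ⟨x.1, a ≫ x.2⟩) (by
        rintro ⟨b, x⟩ ⟨b', x'⟩ ⟨u, hu⟩
        dsimp at u hu
        exact Quot.sound ⟨u, by simp [hu]⟩)
      act_id := by rintro T ⟨b, x⟩; simp
      act_comp := by rintro T T' T'' a₁ a₂ ⟨b, x⟩; simp }
  obtain ⟨ψ, h₁, h₂, h₃⟩ := weighted_lift f hf g hg W (fun T _ => (hF T).some.to _)
    (fun T T' u w => (hF T).some.hom_ext _ _)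
    (fun T => Quot.lift (fun x => Q.map x.2 ≫ c.ι.app x.1 ≫ t) (by
        rintro ⟨b, x⟩ ⟨b', x'⟩ ⟨u, hu⟩
        dsimp at u hu
        subst hu
        have := c.w u
        dsimp at this
        simp [reassoc_of% this]))
    (by rintro T T' u ⟨b, x⟩; simp [W])
    (fun T w => (hF T).some.hom_ext _ _)
  let l : c.pt ⟶ Z := hc.desc ⟨Z, ⟨fun b => ψ (d.obj b) (Quot.mk _ ⟨b, 𝟙 _⟩), fun b b' u => by
    have := h₁ (d.map u) (Quot.mk _ ⟨b', 𝟙 _⟩)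
    dsimp at this ⊢
    rw [this, Category.comp_id]
    congr 1
    exact (Quot.sound ⟨u, by simp⟩).symm⟩⟩
  have hl (b) : c.ι.app b ≫ l = ψ (d.obj b) (Quot.mk _ ⟨b, 𝟙 _⟩) := hc.fac _ _
  refine ⟨l, hc.hom_ext fun b => ?_⟩
  rw [reassoc_of% hl, h₃]
  simp

end Weighted

/-! ### The model category and coproducts in its homotopy category -/

section Model

open HomotopicalAlgebra

theorem IsWFS.isWeakFactorizationSystem {L R : MorphismProperty M} (h : IsWFS L R) :
    MorphismProperty.IsWeakFactorizationSystem L R where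
  rlp := by
    rw [← h.rlp_eq]
    rfl
  llp := by
    rw [← h.llp_eq]
    rfl
  hasFactorization := ⟨fun f => by
    obtain ⟨Z, i, p, hi, hp, fac⟩ := h.factorization f
    exact ⟨⟨Z, i, p, fac, hi, hp⟩⟩⟩

/-- The model category in the sense of Mathlib attached to a model structure. -/
@[reducible]
def ModelStructure.modelCategory [HasLimitsOfSize.{v, v} M] [HasColimitsOfSize.{v, v} M]
    (σ : ModelStructure M) : ModelCategory M :=
  letI : CategoryWithFibrations M := ⟨σ.Fib⟩
  letI : CategoryWithCofibrations M := ⟨σ.Cof⟩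
  letI : CategoryWithWeakEquivalences M := ⟨σ.W⟩
  haveI : HasFiniteLimits M := hasFiniteLimits_of_hasLimitsOfSize M
  haveI : HasFiniteColimits M := hasFiniteColimits_of_hasColimitsOfSize M
  haveI : (weakEquivalences M).HasTwoOutOfThreeProperty :=
    { comp_mem := fun {_ _ _} f g hf hg => σ.w_comp f g hf hg
      of_postcomp := fun {_ _ _} f g hg hfg => σ.w_cancel_right f g hg hfg
      of_precomp := fun {_ _ _} f g hf hfg => σ.w_cancel_left f g hf hfg }
  haveI : MorphismProperty.IsWeakFactorizationSystem (cofibrations M) (trivialFibrations M) := by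
    have := σ.wfs₂.isWeakFactorizationSystem
    rwa [inf_comm] at this
  haveI : MorphismProperty.IsWeakFactorizationSystem (trivialCofibrations M) (fibrations M) :=
    σ.wfs₁.isWeakFactorizationSystem
  ModelCategory.mk' M

variable [ModelCategory M]
  {H : Type u₂} [Category.{v₂} H] (γ : M ⥤ H) [γ.IsLocalization (weakEquivalences M)]

theorem isIso_map_of_weakEquivalence {X Y : M} (f : X ⟶ Y) [WeakEquivalence f] :
    IsIso (γ.map f) :=
  Localization.inverts γ (weakEquivalences M) f ((weakEquivalence_iff f).1 inferInstance)

theorem exists_fibrant_replacement (Z : M) :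
    ∃ (Z' : M) (j : Z ⟶ Z'), IsFibrant Z' ∧ WeakEquivalence j :=
  ⟨_, FibrantObject.HoCat.iResolutionObj Z, inferInstance, inferInstance⟩

theorem exists_cofibrant_iso (Y : H) :
    ∃ (K : M), IsCofibrant K ∧ Nonempty (γ.obj K ≅ Y) := by
  have := Localization.essSurj γ (weakEquivalences M)
  obtain ⟨K, _, p, _, _⟩ := CofibrantObject.HoCat.exists_resolution (γ.objPreimage Y)
  have := isIso_map_of_weakEquivalence γ p
  exact ⟨K, inferInstance, ⟨asIso (γ.map p) ≪≫ γ.objObjPreimageIso Y⟩⟩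

theorem isCofibrant_iff_lift (X : M) :
    IsCofibrant X ↔ ∀ ⦃Z Z' : M⦄ (g : Z ⟶ Z'), trivialFibrations M g →
      ∀ t : X ⟶ Z', ∃ l : X ⟶ Z, l ≫ g = t := by
  constructor
  · intro _ Z Z' g hg t
    obtain ⟨_, _⟩ := (mem_trivialFibrations_iff g).1 hg
    have sq : CommSq (initial.to _) (initial.to X) g t := ⟨by simp⟩
    exact ⟨sq.lift, sq.fac_right⟩
  · intro h
    rw [isCofibrant_iff, cofibration_iff,
      ← MorphismProperty.llp_eq_of_wfs (cofibrations M) (trivialFibrations M)]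
    intro Z Z' g hg
    refine ⟨fun {s t} sq => ?_⟩
    obtain ⟨l, hl⟩ := h g hg t
    exact ⟨⟨⟨l, initial.hom_ext _ _, hl⟩⟩⟩

variable [HasColimitsOfSize.{v, v} M]

theorem isCofibrant_sigma {α : Type v} (K : α → M) [∀ i, IsCofibrant (K i)] :
    IsCofibrant (∐ K) := by
  rw [isCofibrant_iff_lift]
  intro Z Z' g hg t
  choose l hl using fun i => (isCofibrant_iff_lift (K i)).1 inferInstance g hg (Sigma.ι K i ≫ t)
  exact ⟨Sigma.desc l, Sigma.hom_ext _ _ (by simp [hl])⟩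

/-- Two maps out of a coproduct of cofibrant objects which agree in the homotopy category
on all summands are equal there: the homotopies on the summands can be chosen with values in
one good path object, and then they glue. -/
theorem map_eq_of_sigma {α : Type v} (K : α → M) [∀ i, IsCofibrant (K i)] {Z : M} [IsFibrant Z]
    (a b : ∐ K ⟶ Z) (h : ∀ i, γ.map (Sigma.ι K i ≫ a) = γ.map (Sigma.ι K i ≫ b)) :
    γ.map a = γ.map b := by
  have := isCofibrant_sigma K
  obtain ⟨P, _⟩ := PathObject.exists_very_good Z
  let k (i : α) : P.RightHomotopy (Sigma.ι K i ≫ a) (Sigma.ι K i ≫ b) :=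
    ((RightHomotopyRel.iff_map_eq γ _ _).2 (h i)).rightHomotopy P
  rw [← RightHomotopyRel.iff_map_eq γ _ _]
  refine ⟨P, ⟨{ h := Sigma.desc (fun i => (k i).h), h₀ := ?_, h₁ := ?_ }⟩⟩
  · exact Sigma.hom_ext _ _ (by simp)
  · exact Sigma.hom_ext _ _ (by simp)

/-- Coproducts in the homotopy category are images of coproducts of cofibrant replacements. -/
noncomputable def isColimitCofan {α : Type v} (K : α → M) [∀ i, IsCofibrant (K i)] {Y : α → H}
    (e : ∀ i, γ.obj (K i) ≅ Y i) :
    IsColimit (Cofan.mk (γ.obj (∐ K)) (fun i => (e i).inv ≫ γ.map (Sigma.ι K i))) := by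
  have := isCofibrant_sigma K
  have := Localization.essSurj γ (weakEquivalences M)
  have hex (c : Cofan Y) : ∃! l : γ.obj (∐ K) ⟶ c.pt,
      ∀ i, ((e i).inv ≫ γ.map (Sigma.ι K i)) ≫ l = c.inj i := by
    obtain ⟨Z, j, _, _⟩ := exists_fibrant_replacement (γ.objPreimage c.pt)
    have := isIso_map_of_weakEquivalence γ j
    let ε : γ.obj Z ≅ c.pt := (asIso (γ.map j)).symm ≪≫ γ.objObjPreimageIso c.pt
    choose a ha using fun i =>
      map_surjective_of_isLocalization γ (K i) Z ((e i).hom ≫ c.inj i ≫ ε.inv)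
    refine ⟨γ.map (Sigma.desc a) ≫ ε.hom, fun i => ?_, fun l hl => ?_⟩
    · simp only [Category.assoc]
      rw [← γ.map_comp_assoc]
      simp [ha]
    · obtain ⟨b, hb⟩ := map_surjective_of_isLocalization γ (∐ K) Z (l ≫ ε.inv)
      rw [← cancel_mono ε.inv, ← hb, Category.assoc, ε.hom_inv_id, Category.comp_id]
      refine map_eq_of_sigma γ K _ _ fun i => ?_
      rw [γ.map_comp, hb, Sigma.ι_desc, ha, ← hl i]
      simp
  exact Cofan.IsColimit.mk _ (fun c => (hex c).choose) (fun c => (hex c).choose_spec.1)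
    (fun c m hm => (hex c).choose_spec.2 m hm)

end Model

/-! ### Filtered colimits of injective maps and objects -/

section Filtered

variable {I : Set (Arrow M)} {κ : Cardinal.{v}} [Fact κ.IsRegular]
  {J : Type v} [SmallCategory J] [IsCardinalFiltered J κ]

/-- Maps with the right lifting property against maps between `κ`-presentable objects are stable under
`κ`-filtered colimits. -/
theorem rlpSet_of_isColimit
    (hI : ∀ a ∈ I, CategoryTheory.IsCardinalPresentable a.left κ)
    (hI' : ∀ a ∈ I, CategoryTheory.IsCardinalPresentable a.right κ)
    {F G : J ⥤ M} (p : F ⟶ G) (hp : ∀ j, rlpSet I (p.app j))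
    {c : Cocone F} (hc : IsColimit c) {c' : Cocone G} (hc' : IsColimit c') (k : c.pt ⟶ c'.pt)
    (hk : ∀ j, c.ι.app j ≫ k = p.app j ≫ c'.ι.app j) : rlpSet I k := by
  intro a ha
  have := hI a ha
  have := hI' a ha
  have := isFiltered_of_isCardinalFiltered J κ
  refine ⟨fun {s t} sq => ?_⟩
  obtain ⟨j₁, s₀, rfl⟩ := IsCardinalPresentable.exists_hom_of_isColimit κ hc s
  obtain ⟨j₂, t₀, rfl⟩ := IsCardinalPresentable.exists_hom_of_isColimit κ hc' t
  obtain ⟨j, u₁, u₂, h⟩ := IsCardinalPresentable.exists_eq_of_isColimit κ hc'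
    (s₀ ≫ p.app j₁) (a.hom ≫ t₀) (by simpa [hk] using sq.w)
  have := hp j a ha
  have sq' : CommSq (s₀ ≫ F.map u₁) a.hom (p.app j) (t₀ ≫ G.map u₂) := ⟨by simpa using h⟩
  refine ⟨⟨⟨sq'.lift ≫ c.ι.app j, ?_, ?_⟩⟩⟩
  · simp
  · simp [hk]

/-- Injectivity with respect to maps with `κ`-presentable domains is stable under `κ`-filtered
colimits. Nothing is assumed about the codomains. -/
theorem injective_of_isColimit
    (hI : ∀ a ∈ I, CategoryTheory.IsCardinalPresentable a.left κ)
    {F : J ⥤ M} (hF : ∀ j, ∀ a ∈ I, ∀ s : a.left ⟶ F.obj j, ∃ l : a.right ⟶ F.obj j, a.hom ≫ l = s)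
    {c : Cocone F} (hc : IsColimit c) :
    ∀ a ∈ I, ∀ s : a.left ⟶ c.pt, ∃ l : a.right ⟶ c.pt, a.hom ≫ l = s := by
  intro a ha s
  have := hI a ha
  obtain ⟨j, s₀, rfl⟩ := IsCardinalPresentable.exists_hom_of_isColimit κ hc s
  obtain ⟨l, rfl⟩ := hF j a ha s₀
  exact ⟨l ≫ c.ι.app j, by simp⟩

end Filtered

/-! ### Presentable objects as retracts of small colimits -/

section Size

set_option linter.unusedSectionVars false

variable {κ lam : Cardinal.{v}} [Fact κ.IsRegular] [Fact lam.IsRegular]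

/-- The subsets of `P` of cardinality `< lam` which are `κ`-directed. -/
abbrev DirectedSub (κ lam : Cardinal.{v}) [Fact κ.IsRegular] (P : Type v) [PartialOrder P] :
    Type v :=
  { B : Set P // IsCardinalFiltered B κ ∧ HasCardinalLT B lam }

/-- `κ`-directed subsets of cardinality `< lam` are cofinal among all subsets of cardinality
`< lam`. -/
def CofinalDirectedSub (κ lam : Cardinal.{v}) [Fact κ.IsRegular] (P : Type v) [PartialOrder P] :
    Prop :=
  ∀ A : Set P, HasCardinalLT A lam → ∃ B : DirectedSub κ lam P, A ⊆ B.1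

/-- The cardinal arithmetic: for `lam = (2 ^ μ)⁺` and `κ ≤ μ`, a set of size `< lam` has size at most
`2 ^ μ`, hence has at most `(2 ^ μ) ^ κ = 2 ^ μ` subsets of size `< κ`. -/
theorem cofinalDirectedSub (μ : Cardinal.{v}) (hμ : κ ≤ μ) (hlam : lam = Order.succ (2 ^ μ))
    (P : Type v) [PartialOrder P] [IsCardinalFiltered P κ] : CofinalDirectedSub κ lam P := by
  intro A hA
  have h₁ : μ < 2 ^ μ := Cardinal.cantor μ
  have h₂ : 2 ^ μ < lam := hlam ▸ Order.lt_succ _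
  have h₀ : Cardinal.aleph0 ≤ κ := (Fact.out : κ.IsRegular).aleph0_le
  have hle : κ < lam := (hμ.trans_lt h₁).trans h₂
  obtain ⟨B, hAB, hB₁, hB₂⟩ := Cardinal.SharplyLT.exists_isCardinalFiltered_set_of_exists_cofinal
    hle (fun X hX => by
      refine ⟨Set.univ, ?_, fun x => ⟨x, trivial, le_rfl⟩⟩
      rw [hasCardinalLT_iff_cardinal_mk_lt] at hX ⊢
      rw [Cardinal.mk_univ]
      rw [hlam, Order.lt_succ_iff] at hX
      have hinj : Cardinal.mk (CardinalDirectedPoset.SetCardinalLT κ X) ≤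
          Cardinal.mk { t : Set X // Cardinal.mk t ≤ κ } :=
        Cardinal.mk_le_of_injective
          (f := fun t => ⟨t.1, ((hasCardinalLT_iff_cardinal_mk_lt _ _).1 t.2).le⟩)
          (fun s t h => Subtype.ext (congrArg (fun x => x.1) h))
      refine (hinj.trans (Cardinal.mk_bounded_set_le X κ)).trans_lt (lt_of_le_of_lt ?_ h₂)
      calc max (Cardinal.mk X) Cardinal.aleph0 ^ κ ≤ (2 ^ μ) ^ κ :=
            Cardinal.power_le_power_right (max_le hX (h₀.trans (hμ.trans h₁.le)))
        _ = 2 ^ μ := by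
            rw [← Cardinal.power_mul, Cardinal.mul_eq_left (h₀.trans hμ) hμ
              (Fact.out : κ.IsRegular).pos.ne']) A hA
  exact ⟨⟨B, hB₁, hB₂⟩, hAB⟩

variable {P : Type v} [PartialOrder P]

theorem CofinalDirectedSub.isCardinalFiltered (h : CofinalDirectedSub κ lam P) :
    IsCardinalFiltered (DirectedSub κ lam P) lam :=
  isCardinalFiltered_preorder _ _ (fun K s hK => by
    obtain ⟨B, hB⟩ := h (⋃ k, (s k).1) (hasCardinalLT_iUnion _
      (by rwa [hasCardinalLT_iff_cardinal_mk_lt]) (fun k => (s k).2.2))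
    exact ⟨B, fun k => (Set.subset_iUnion (fun k => (s k).1) k).trans hB⟩)

/-- The inclusion of a subset of a poset. -/
abbrev inclSub (B : Set P) : B ⥤ P :=
  Monotone.functor (f := fun b : B => (b : P)) (fun _ _ h => h)

variable [HasColimitsOfSize.{v, v} M] (D : P ⥤ M)

/-- The colimit of the restriction of `D` to the subset `B`. -/
noncomputable def subPt (B : Set P) : M :=
  colimit (inclSub B ⋙ D)

/-- The coprojections of `subPt D B`. -/
noncomputable def subι (B : Set P) (p : P) (hp : p ∈ B) : D.obj p ⟶ subPt D B :=
  colimit.ι (inclSub B ⋙ D) ⟨p, hp⟩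

theorem subι_w (B : Set P) (p q : P) (hp : p ∈ B) (hq : q ∈ B) (f : p ⟶ q) :
    D.map f ≫ subι D B q hq = subι D B p hp :=
  colimit.w (inclSub B ⋙ D) (homOfLE (leOfHom f) : (⟨p, hp⟩ : B) ⟶ ⟨q, hq⟩)

/-- The map out of `subPt D B` with components `k`. -/
noncomputable def subDesc (B : Set P) {Z : M} (k : ∀ p, p ∈ B → (D.obj p ⟶ Z))
    (hk : ∀ p q hp hq (f : p ⟶ q), D.map f ≫ k q hq = k p hp) : subPt D B ⟶ Z :=
  colimit.desc (inclSub B ⋙ D) ⟨Z, { app := fun b => k b.1 b.2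
                                     naturality := fun b b' u =>
                                      (hk b.1 b'.1 b.2 b'.2 (homOfLE (leOfHom u))).trans
                                        (Category.comp_id _).symm }⟩

theorem subι_subDesc (B : Set P) {Z : M} (k : ∀ p, p ∈ B → (D.obj p ⟶ Z)) (hk) (p : P)
    (hp : p ∈ B) : subι D B p hp ≫ subDesc D B k hk = k p hp :=
  colimit.ι_desc _ _

theorem subPt_hom_ext (B : Set P) {Z : M} {f g : subPt D B ⟶ Z}
    (h : ∀ p hp, subι D B p hp ≫ f = subι D B p hp ≫ g) : f = g :=
  colimit.hom_ext (fun b => h b.1 b.2)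

theorem DirectedSub.mem_of_hom {B B' : DirectedSub κ lam P} (f : B ⟶ B') {p : P}
    (hp : p ∈ B.1) : p ∈ B'.1 :=
  leOfHom f hp

/-- The colimits of the restrictions of `D` to the members of `DirectedSub κ lam P`. -/
noncomputable def subColimit : DirectedSub κ lam P ⥤ M where
  obj B := subPt D B.1
  map {B B'} f := subDesc D B.1 (fun p hp => subι D B'.1 p (DirectedSub.mem_of_hom f hp))
    (fun p q hp hq u => subι_w D _ p q _ _ u)
  map_id B := subPt_hom_ext D _ (fun p hp => by rw [subι_subDesc, Category.comp_id])
  map_comp f g := subPt_hom_ext D _ (fun p hp => by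
    rw [← Category.assoc, subι_subDesc, subι_subDesc, subι_subDesc])

/-- The coprojections of the values of `subColimit D`. -/
noncomputable def subColimitι (B : DirectedSub κ lam P) (p : P) (hp : p ∈ B.1) :
    D.obj p ⟶ (subColimit D).obj B :=
  subι D B.1 p hp

theorem subColimitι_w (B : DirectedSub κ lam P) (p q : P) (hp : p ∈ B.1) (hq : q ∈ B.1)
    (f : p ⟶ q) : D.map f ≫ subColimitι D B q hq = subColimitι D B p hp :=
  subι_w D B.1 p q hp hq f

theorem subColimitι_map {B B' : DirectedSub κ lam P} (f : B ⟶ B') (p : P) (hp : p ∈ B.1) :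
    subColimitι D B p hp ≫ (subColimit D).map f =
      subColimitι D B' p (DirectedSub.mem_of_hom f hp) :=
  subι_subDesc D B.1 (fun p hp => subι D B'.1 p (DirectedSub.mem_of_hom f hp))
    (fun p q hp hq u => subι_w D _ p q _ _ u) p hp

theorem subColimit_hom_ext (B : DirectedSub κ lam P) {Z : M} {f g : (subColimit D).obj B ⟶ Z}
    (h : ∀ p hp, subColimitι D B p hp ≫ f = subColimitι D B p hp ≫ g) : f = g :=
  subPt_hom_ext D B.1 h

/-- The map out of a value of `subColimit D` given by a cocone on `D`. -/
noncomputable def subColimitDesc (B : DirectedSub κ lam P) (c : Cocone D) :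
    (subColimit D).obj B ⟶ c.pt :=
  subDesc D B.1 (fun p _ => c.ι.app p) (fun _ _ _ _ u => c.w u)

theorem subColimitι_desc (B : DirectedSub κ lam P) (c : Cocone D) (p : P) (hp : p ∈ B.1) :
    subColimitι D B p hp ≫ subColimitDesc D B c = c.ι.app p :=
  subι_subDesc D B.1 _ _ p hp

/-- A cocone on `D` restricts to a cocone on the colimits of its restrictions. -/
noncomputable abbrev subColimitCocone (c : Cocone D) :
    Cocone (subColimit D : DirectedSub κ lam P ⥤ M) where
  pt := c.pt
  ι :=
    { app := fun B => subColimitDesc D B c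
      naturality := fun B B' f => subColimit_hom_ext D B (fun p hp => by
        rw [← Category.assoc, subColimitι_map, subColimitι_desc]
        exact (subColimitι_desc D B c p hp).symm.trans
          (congrArg (fun t => subColimitι D B p hp ≫ t) (Category.comp_id _).symm)) }

theorem subColimitι_cocone (c : Cocone D) (B : DirectedSub κ lam P) (p : P) (hp : p ∈ B.1) :
    subColimitι D B p hp ≫ (subColimitCocone D c).ι.app B = c.ι.app p :=
  subColimitι_desc D B c p hp

/-- A colimit over a `κ`-directed poset is the colimit of the colimits over its small
`κ`-directed subsets, provided the latter are cofinal among the small subsets. -/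
noncomputable def isColimitSubColimitCocone (h : CofinalDirectedSub κ lam P) {c : Cocone D}
    (hc : IsColimit c) : IsColimit (subColimitCocone (κ := κ) (lam := lam) D c) := by
  have := h.isCardinalFiltered
  have := isFiltered_of_isCardinalFiltered (DirectedSub κ lam P) lam
  have hex (p : P) : ∃ B : DirectedSub κ lam P, p ∈ B.1 := by
    obtain ⟨B, hB⟩ := h {p} (hasCardinalLT_of_finite _ _ (Fact.out : lam.IsRegular).aleph0_le)
    exact ⟨B, hB rfl⟩
  choose b hb using hex
  let leg (s : Cocone (subColimit D : DirectedSub κ lam P ⥤ M)) (B : DirectedSub κ lam P) (p : P)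
    (hp : p ∈ B.1) : D.obj p ⟶ s.pt := subColimitι D B p hp ≫ s.ι.app B
  -- The component at `p` does not depend on the directed subset containing `p`.
  have hleg (s : Cocone (subColimit D : DirectedSub κ lam P ⥤ M)) (B B' : DirectedSub κ lam P)
      (p : P) (hp : p ∈ B.1) (hp' : p ∈ B'.1) : leg s B p hp = leg s B' p hp' := by
    have key (B B' : DirectedSub κ lam P) (f : B ⟶ B') (hp : p ∈ B.1) :
        leg s B p hp = leg s B' p (DirectedSub.mem_of_hom f hp) := by
      dsimp only [leg]
      rw [← s.w f, ← Category.assoc, subColimitι_map]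
    rw [key B _ (IsFiltered.leftToMax B B') hp, key B' _ (IsFiltered.rightToMax B B') hp']
  have hnat (s : Cocone (subColimit D : DirectedSub κ lam P ⥤ M)) (p q : P) (f : p ⟶ q) :
      D.map f ≫ leg s (b q) q (hb q) = leg s (b p) p (hb p) := by
    let m := IsFiltered.max (b p) (b q)
    have hp : p ∈ m.1 := DirectedSub.mem_of_hom (IsFiltered.leftToMax (b p) (b q)) (hb p)
    have hq : q ∈ m.1 := DirectedSub.mem_of_hom (IsFiltered.rightToMax (b p) (b q)) (hb q)
    rw [hleg s _ m q _ hq, hleg s _ m p _ hp]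
    dsimp only [leg]
    rw [← subColimitι_w D m p q hp hq f, Category.assoc]
  exact
    { desc := fun s => hc.desc ⟨s.pt, ⟨fun p => leg s (b p) p (hb p), fun p q f =>
        (hnat s p q f).trans (Category.comp_id _).symm⟩⟩
      fac := fun s B => subColimit_hom_ext D B (fun p hp => by
        rw [← Category.assoc, subColimitι_cocone]
        exact (hc.fac _ p).trans (hleg s _ _ _ _ _))
      uniq := fun s m hm => hc.hom_ext (fun p => by
        rw [hc.fac]
        dsimp only [leg]
        rw [← hm, ← Category.assoc, subColimitι_cocone]) }

end Size

section Retract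

/-- A small family of presentable objects is uniformly presentable, for a rank as large as
desired. -/
theorem exists_isCardinalPresentable_forall {α : Type u₁} [Small.{v} α] (X : α → M)
    [∀ a, IsPresentable.{v} (X a)] (κ : Cardinal.{v}) :
    ∃ (μ : Cardinal.{v}) (_ : Fact μ.IsRegular), κ ≤ μ ∧
      ∀ a, CategoryTheory.IsCardinalPresentable (X a) μ := by
  have hex (a : α) : ∃ (μ : Cardinal.{v}) (_ : Fact μ.IsRegular),
      CategoryTheory.IsCardinalPresentable (X a) μ := by
    obtain ⟨μ, hμ, h⟩ := ‹∀ a, IsPresentable.{v} (X a)› a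
    exact ⟨μ, hμ, h⟩
  choose μ hμ hX using hex
  obtain ⟨ν, hν, h⟩ := HasCardinalLT.exists_regular_cardinal_forall.{v}
    (Sum.elim (fun _ : PUnit.{u₁ + 1} => κ.out) (fun a => (μ a).out))
  have : Fact ν.IsRegular := ⟨hν⟩
  refine ⟨ν, this, ?_, fun a => ?_⟩
  · simpa [hasCardinalLT_iff_cardinal_mk_lt] using (h (Sum.inl ⟨⟩)).le
  · have := hX a
    refine isCardinalPresentable_of_le (κ := μ a) (X a) ?_
    have := h (Sum.inr a)
    rw [hasCardinalLT_iff_cardinal_mk_lt] at this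
    simpa using this.le

variable {κ lam : Cardinal.{v}} [Fact κ.IsRegular] [Fact lam.IsRegular]

/-- A `lam`-presentable object is a retract of a `κ`-directed colimit of size `< lam` of
`κ`-presentable objects. -/
theorem exists_retract [IsCardinalLocallyPresentable M κ]
    (h : ∀ (P : Type v) [PartialOrder P] [IsCardinalFiltered P κ], CofinalDirectedSub κ lam P)
    (X : M) [CategoryTheory.IsCardinalPresentable X lam] :
    ∃ (B : Type v) (_ : PartialOrder B) (_ : IsCardinalFiltered B κ)
      (_ : HasCardinalLT (Arrow B) lam) (d : B ⥤ M),
      (∀ b, CategoryTheory.IsCardinalPresentable (d.obj b) κ) ∧ Nonempty (Retract X (colimit d)) := by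
  obtain ⟨J, _, _, ⟨p⟩⟩ :=
    (isCardinalFilteredGenerator_isCardinalPresentable M κ).exists_colimitsOfShape X
  obtain ⟨P, _, _, F, _⟩ := IsCardinalFiltered.exists_cardinal_directed J κ
  have hc : IsColimit (Cocone.whisker F (Cocone.mk X p.ι)) :=
    (Functor.Final.isColimitWhiskerEquiv F _).symm p.isColimit
  have hP := h P
  have := hP.isCardinalFiltered
  obtain ⟨B, r, hr⟩ := IsCardinalPresentable.exists_hom_of_isColimit lam
    (isColimitSubColimitCocone (F ⋙ p.diag) hP hc) (𝟙 X)
  have := B.2.1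
  refine ⟨B.1, inferInstance, B.2.1, ?_, inclSub B.1 ⋙ F ⋙ p.diag,
    fun b => p.prop_diag_obj _, ⟨⟨r, _, hr⟩⟩⟩
  refine (hasCardinalLT_prod (Fact.out : lam.IsRegular).aleph0_le B.2.2 B.2.2).of_injective
    (fun f => (f.left, f.right)) (fun f g hfg => ?_)
  obtain ⟨a, b, f⟩ := f
  obtain ⟨a', b', g⟩ := g
  obtain ⟨rfl, rfl⟩ : a = a' ∧ b = b' := by simpa using hfg
  obtain rfl : f = g := Subsingleton.elim _ _
  rfl

/-- For all `lam` above some cardinal `μ` such that `CofinalDirectedSub κ lam` holds for `κ`-directed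
posets, every `lam`-presentable object `X` is a retract of an
object `X'` admitting a map `p : Q ⟶ X'` with the right lifting property against `I`, where `Q` is
again of rank `lam` and lifts against the maps with the right lifting property. -/
theorem exists_cover [IsCardinalLocallyPresentable M κ] [HasLimitsOfSize.{v, v} M]
    (I : Set (Arrow M)) [Small.{v} I]
    (hI : ∀ a ∈ I, CategoryTheory.IsCardinalPresentable a.left κ)
    (hI' : ∀ a ∈ I, CategoryTheory.IsCardinalPresentable a.right κ) :
    ∃ (μ : Cardinal.{v}), κ ≤ μ ∧ ∀ (lam : Cardinal.{v}) [Fact lam.IsRegular], μ ≤ lam →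
      (∀ (P : Type v) [PartialOrder P] [IsCardinalFiltered P κ], CofinalDirectedSub κ lam P) →
      ∀ (X : M) [CategoryTheory.IsCardinalPresentable X lam],
        ∃ (X' Q : M) (p : Q ⟶ X'), Nonempty (Retract X X') ∧ rlpSet I p ∧
          CategoryTheory.IsCardinalPresentable Q lam ∧
          ∀ ⦃Z Z' : M⦄ (g : Z ⟶ Z'), rlpSet I g → ∀ t : Q ⟶ Z', ∃ l : Q ⟶ Z, l ≫ g = t := by
  let S := (isCardinalPresentable M κ).FullSubcategory
  let e : S ≌ SmallModel.{v} S := equivSmallModel S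
  let i : SmallModel.{v} S ⥤ M := e.inverse ⋙ (isCardinalPresentable M κ).ι
  let φ : (Functor.const (SmallModel.{v} S)).obj (⊥_ M) ⟶ i := { app := fun T => initial.to _ }
  obtain ⟨Q, f, p, _, hp, hf⟩ := exists_pw_factorization (SmallModel.{v} S) I hI φ
  have : IsAccessibleCategory.{v} M := ⟨κ, inferInstance, inferInstance⟩
  obtain ⟨μ, _, hκ, hμ⟩ := exists_isCardinalPresentable_forall Q.obj κ
  refine ⟨μ, hκ, fun lam _ hlam hcof X _ => ?_⟩
  obtain ⟨B, _, _, hB, d, hd, ⟨r⟩⟩ := exists_retract hcof X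
  let d' : B ⥤ SmallModel.{v} S := (isCardinalPresentable M κ).lift d hd ⋙ e.functor
  let iso : d' ⋙ i ≅ d :=
    Functor.isoWhiskerRight (Functor.isoWhiskerLeft ((isCardinalPresentable M κ).lift d hd)
      e.unitIso.symm) (isCardinalPresentable M κ).ι
  refine ⟨colimit d, colimit (d' ⋙ Q), colimMap (Functor.whiskerLeft d' p ≫ iso.hom), ⟨r⟩, ?_, ?_,
    fun Z Z' g hg t =>
      exists_lift_colimit f hf (fun _ => ⟨initialIsInitial⟩) d' (colimit.isColimit _) g hg t⟩
  · have hc : IsColimit ((Cocone.precompose iso.hom).obj (colimit.cocone d)) :=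
      (IsColimit.precomposeHomEquiv iso _).symm (colimit.isColimit d)
    refine rlpSet_of_isColimit hI hI' (Functor.whiskerLeft d' p) (fun b => hp _)
      (colimit.isColimit (d' ⋙ Q)) hc _ (fun b => ?_)
    simp
  · have (b : B) : CategoryTheory.IsCardinalPresentable ((d' ⋙ Q).obj b) lam :=
      have := hμ (d'.obj b)
      isCardinalPresentable_of_le (κ := μ) (Q.obj (d'.obj b)) hlam
    exact isCardinalPresentable_of_isColimit _ (colimit.isColimit (d' ⋙ Q)) lam hB

end Retract

/-! ### Coproducts as filtered colimits of small subcoproducts -/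

section SubCoproduct

variable [HasColimitsOfSize.{v, v} M] {ι : Type v} (K : ι → M)
  {lam : Cardinal.{v}} [Fact lam.IsRegular]

/-- The canonical map from a subcoproduct. -/
noncomputable def sigmaIncl (J : Set ι) : (∐ fun j : J => K j) ⟶ ∐ K :=
  Sigma.desc (fun j => Sigma.ι K j)

theorem ι_sigmaIncl (J : Set ι) (j : J) :
    Sigma.ι (fun j : J => K j) j ≫ sigmaIncl K J = Sigma.ι K j :=
  Sigma.ι_desc _ _

/-- The canonical map between two subcoproducts. -/
noncomputable def sigmaMap {J J' : Set ι} (h : J ≤ J') :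
    (∐ fun j : J => K j) ⟶ ∐ fun j : J' => K j :=
  Sigma.desc (fun j => Sigma.ι (fun j : J' => K j) ⟨j.1, h j.2⟩)

theorem ι_sigmaMap {J J' : Set ι} (h : J ≤ J') (j : J) :
    Sigma.ι (fun j : J => K j) j ≫ sigmaMap K h = Sigma.ι (fun j : J' => K j) ⟨j.1, h j.2⟩ :=
  Sigma.ι_desc _ _

theorem sigmaMap_incl {J J' : Set ι} (h : J ≤ J') :
    sigmaMap K h ≫ sigmaIncl K J' = sigmaIncl K J :=
  Sigma.hom_ext _ _ (fun j => by rw [← Category.assoc, ι_sigmaMap, ι_sigmaIncl, ι_sigmaIncl])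

variable (lam) in
/-- The diagram of the subcoproducts of `K` of size `< lam`. -/
noncomputable abbrev subSigma : CardinalDirectedPoset.SetCardinalLT lam ι ⥤ M where
  obj J := ∐ fun j : J.1 => K j
  map f := sigmaMap K (leOfHom f)
  map_id J := Sigma.hom_ext _ _ (fun j => by rw [ι_sigmaMap, Category.comp_id])
  map_comp f g := Sigma.hom_ext _ _ (fun j => by
    rw [← Category.assoc, ι_sigmaMap, ι_sigmaMap, ι_sigmaMap])

variable (lam) in
/-- The cocone on the small subcoproducts of `K` with vertex `∐ K`. -/
noncomputable abbrev subSigmaCocone : Cocone (subSigma K lam) where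
  pt := ∐ K
  ι :=
    { app := fun J => sigmaIncl K J.1
      naturality := fun _ _ f => (sigmaMap_incl K (leOfHom f)).trans (Category.comp_id _).symm }

variable (lam) in
/-- A coproduct is the colimit of its subcoproducts of size `< lam`: the component at `i` is
read off on the singleton `{i}`. -/
noncomputable def isColimitSubSigmaCocone : IsColimit (subSigmaCocone K lam) :=
  let single (i : ι) : CardinalDirectedPoset.SetCardinalLT lam ι :=
    CardinalDirectedPoset.SetCardinalLT.singleton lam i
  { desc := fun s => Sigma.desc (fun i =>
      Sigma.ι (fun j : (single i).1 => K j) ⟨i, rfl⟩ ≫ s.ι.app (single i))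
    fac := fun s J => Sigma.hom_ext _ _ (fun j => by
      have hle : single j.1 ≤ J := by
        rintro _ rfl
        exact j.2
      have h₁ := s.w (homOfLE hle)
      rw [← Category.assoc, ι_sigmaIncl, Sigma.ι_desc, ← h₁, ← Category.assoc]
      exact congrArg (fun t => t ≫ s.ι.app J) (ι_sigmaMap K hle ⟨j.1, rfl⟩))
    uniq := fun s m hm => Sigma.hom_ext _ _ (fun i => by
      rw [Sigma.ι_desc, ← hm, ← Category.assoc, ι_sigmaIncl]) }

end SubCoproduct

/-! ### Factorization through small subcoproducts -/

section Final

open HomotopicalAlgebra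

variable {H : Type u₂} [Category.{v₂} H] (γ : M ⥤ H)

/-- The diagram chase in the homotopy category. If, up to the weak equivalences `p`, `t`, `t'` and the
retraction `r`, the morphism `φ` is represented by a map `h ≫ k` factoring through `k : R ⟶ R'`, then
`φ` factors through the map `m : P ⟶ S` corresponding to `k`. -/
theorem exists_lift_of_isIso {X X' Q P S R R' : M} (r : Retract X X') (p : Q ⟶ X') (m : P ⟶ S)
    (t : P ⟶ R) (t' : S ⟶ R') (k : R ⟶ R') (hk : m ≫ t' = t ≫ k) (h : Q ⟶ R)
    (φ : γ.obj X ⟶ γ.obj S) [IsIso (γ.map p)] [IsIso (γ.map t)] [IsIso (γ.map t')]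
    (hh : γ.map (h ≫ k) = γ.map p ≫ γ.map r.r ≫ φ ≫ γ.map t') :
    ∃ g : γ.obj X ⟶ γ.obj P, g ≫ γ.map m = φ := by
  refine ⟨γ.map r.i ≫ inv (γ.map p) ≫ γ.map h ≫ inv (γ.map t), ?_⟩
  rw [← cancel_mono (γ.map t')]
  have h₁ : γ.map m ≫ γ.map t' = γ.map t ≫ γ.map k := by rw [← γ.map_comp, hk, γ.map_comp]
  have h₂ : γ.map r.i ≫ γ.map r.r = 𝟙 _ := by rw [← γ.map_comp, r.retract, γ.map_id]
  rw [γ.map_comp] at hh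
  simp only [Category.assoc, h₁, IsIso.inv_hom_id_assoc, hh]
  rw [← Category.assoc, h₂, Category.id_comp]

variable [ModelCategory M] [HasLimitsOfSize.{v, v} M] [HasColimitsOfSize.{v, v} M]
  [γ.IsLocalization (weakEquivalences M)]

/-- A map lifting against all fibrations is a trivial cofibration, hence becomes invertible. -/
theorem isIso_map_of_llp {A B : M} (k : A ⟶ B)
    (hk : ∀ ⦃Z Z' : M⦄ (g : Z ⟶ Z'), fibrations M g → HasLiftingProperty k g) :
    IsIso (γ.map k) := by
  have h : trivialCofibrations M k := by
    rw [← MorphismProperty.llp_eq_of_wfs (trivialCofibrations M) (fibrations M)]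
    exact fun _ _ g hg => hk g hg
  have := ((mem_trivialCofibrations_iff k).1 h).2
  exact isIso_map_of_weakEquivalence γ k

/-- The factorization property, for images of coproducts of the model category.  The
pointwise trivial cofibration `t` from the diagram of small subcoproducts to a diagram `R` of
fibrant objects induces a trivial cofibration from the coproduct to the fibrant object `colimit R`,
so that a morphism in the homotopy category is represented by a map `Q ⟶ colimit R`, which factors
through a stage of `R`. -/
theorem exists_factorization {κ lam : Cardinal.{v}} [Fact κ.IsRegular] [Fact lam.IsRegular]
    (hle : κ ≤ lam) (I : Set (Arrow M)) [Small.{v} I]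
    (hI : ∀ a ∈ I, CategoryTheory.IsCardinalPresentable a.left κ)
    (hfib : rlpSet I = fibrations M) {X X' Q : M} (r : Retract X X') (p : Q ⟶ X')
    [WeakEquivalence p] [IsCofibrant Q] [CategoryTheory.IsCardinalPresentable Q lam]
    {ι : Type v} (K : ι → M) (φ : γ.obj X ⟶ γ.obj (∐ K)) :
    ∃ J : Set ι, HasCardinalLT J lam ∧
      ∃ g : γ.obj X ⟶ γ.obj (∐ fun j : J => K j), g ≫ γ.map (sigmaIncl K J) = φ := by
  let 𝒥 := CardinalDirectedPoset.SetCardinalLT lam ι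
  obtain ⟨R, t, q, _, hq, ht⟩ := exists_pw_factorization 𝒥 I hI
    ({ app := fun J => terminal.from _ } : subSigma K lam ⟶ (Functor.const 𝒥).obj (⊤_ M))
  let t' : ∐ K ⟶ colimit R :=
    (isColimitSubSigmaCocone K lam).desc ((Cocone.precompose t).obj (colimit.cocone R))
  have ht' (J : 𝒥) : sigmaIncl K J.1 ≫ t' = t.app J ≫ colimit.ι R J :=
    (isColimitSubSigmaCocone K lam).fac _ J
  have hiso : IsIso (γ.map t') := isIso_map_of_llp γ t' (fun Z Z' g hg =>
    hasLiftingProperty_of_isColimit t ht (isColimitSubSigmaCocone K lam) (colimit.isColimit R) t'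
      ht' g (by rwa [hfib]))
  have hisoJ (J : 𝒥) : IsIso (γ.map (t.app J)) := isIso_map_of_llp γ _ (fun Z Z' g hg =>
    hasLiftingProperty_app t ht J g (by rwa [hfib]))
  have : IsCardinalFiltered 𝒥 κ := IsCardinalFiltered.of_le 𝒥 hle
  have hinj := injective_of_isColimit hI (F := R) (fun J a ha s => by
    have := hq J a ha
    have sq : CommSq s a.hom (q.app J) (terminal.from _) := ⟨terminal.hom_ext _ _⟩
    exact ⟨sq.lift, sq.fac_left⟩) (colimit.isColimit R)
  have : IsFibrant (colimit R) := by
    rw [isFibrant_iff, fibration_iff, ← hfib]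
    intro a ha
    refine ⟨fun {s _} sq => ?_⟩
    obtain ⟨l, hl⟩ := hinj a ha s
    exact ⟨⟨⟨l, hl, terminal.hom_ext _ _⟩⟩⟩
  have := isIso_map_of_weakEquivalence γ p
  obtain ⟨h, hh⟩ := map_surjective_of_isLocalization γ Q (colimit R)
    (γ.map p ≫ γ.map r.r ≫ φ ≫ γ.map t')
  obtain ⟨J, h₀, rfl⟩ := IsCardinalPresentable.exists_hom_of_isColimit lam (colimit.isColimit R) h
  have := hisoJ J
  exact ⟨J.1, J.2, exists_lift_of_isIso γ r p _ (t.app J) t' (colimit.ι R J) (ht' J) h₀ φ hh⟩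

/-- The factorization property, for an arbitrary coproduct in the homotopy category. -/
theorem exists_factorization_cofan {lam : Cardinal.{v}} {X : M}
    (hX : ∀ {ι : Type v} (K : ι → M) (φ : γ.obj X ⟶ γ.obj (∐ K)), ∃ J : Set ι, HasCardinalLT J lam ∧
      ∃ g : γ.obj X ⟶ γ.obj (∐ fun j : J => K j), g ≫ γ.map (sigmaIncl K J) = φ)
    {ι : Type v} {Y : ι → H} {cf : Cofan Y} (hcf : IsColimit cf) (f : γ.obj X ⟶ cf.pt) :
    ∃ J : Set ι, HasCardinalLT J lam ∧
      ∃ (cf' : Cofan (fun j : J => Y j)) (hcf' : IsColimit cf') (g : γ.obj X ⟶ cf'.pt),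
        g ≫ hcf'.desc (Cofan.mk cf.pt (fun j : J => cf.inj j)) = f := by
  choose K hK e using fun i => exists_cofibrant_iso γ (Y i)
  replace e (i : ι) : γ.obj (K i) ≅ Y i := (e i).some
  let θ : cf.pt ≅ γ.obj (∐ K) := hcf.coconePointUniqueUpToIso (isColimitCofan γ K e)
  have hθ (i : ι) : cf.inj i ≫ θ.hom = (e i).inv ≫ γ.map (Sigma.ι K i) :=
    hcf.comp_coconePointUniqueUpToIso_hom (isColimitCofan γ K e) ⟨i⟩
  obtain ⟨J, hJ, g, hg⟩ := hX K (f ≫ θ.hom)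
  let hcf' := isColimitCofan γ (fun j : J => K j) (fun j => e j)
  refine ⟨J, hJ, _, hcf', g, ?_⟩
  rw [← cancel_mono θ.hom, ← hg, Category.assoc]
  congr 1
  refine Cofan.IsColimit.hom_ext hcf' _ _ (fun j => ?_)
  have h₁ : Cofan.inj _ j ≫ hcf'.desc (Cofan.mk cf.pt (fun j : J => cf.inj j)) = cf.inj j.1 :=
    hcf'.fac _ ⟨j⟩
  rw [← Category.assoc, h₁, hθ, ← ι_sigmaIncl K J j, γ.map_comp, ← Category.assoc]
  rfl

end Final

/-- Let `M` be a combinatorial model category with localization functor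
`γ : M ⥤ Ho(M)` to its homotopy category.  Then there is a regular cardinal `λ` such that
for every `λ`-presentable object `X` of `M`, the object `γ(X)` is `λ`-presentable with
respect to coproducts in `Ho(M)`: every morphism `γ(X) ⟶ ∐ᵢ Yᵢ` factors through a
subcoproduct `∐_{j ∈ J} Yⱼ` with `|J| < λ`. -/
theorem statement18 {M : Type u} [Category.{v} M]
    [HasLimitsOfSize.{v, v} M] [HasColimitsOfSize.{v, v} M]
    (σ : ModelStructure M) (hcomb : IsCombinatorial σ)
    {H : Type u₂} [Category.{v₂} H] (γ : M ⥤ H) [γ.IsLocalization σ.W] :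
    ∃ lam : Cardinal.{v}, lam.IsRegular ∧
      ∀ X : M, IsCardinalPresentable lam X →
        ∀ (ι : Type v) (Y : ι → H) (cf : Cofan Y), IsColimit cf →
          ∀ f : γ.obj X ⟶ cf.pt,
            ∃ J : Set ι, Cardinal.mk J < lam ∧
              ∃ (cf' : Cofan (fun j : J => Y j)) (hcf' : IsColimit cf')
                (g : γ.obj X ⟶ cf'.pt),
                  g ≫ hcf'.desc (Cofan.mk cf.pt (fun j : J => cf.inj j)) = f := by
  let _ := σ.modelCategory
  have : γ.IsLocalization (HomotopicalAlgebra.weakEquivalences M) :=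
    inferInstanceAs (γ.IsLocalization σ.W)
  obtain ⟨hM, ⟨I, _, _, hI, _⟩, ⟨I', _, _, hI', _⟩⟩ := hcomb
  obtain ⟨κ₀, _, _⟩ := exists_isCardinalLocallyPresentable hM
  have : IsAccessibleCategory.{v} M := ⟨κ₀, inferInstance, inferInstance⟩
  have := hI.small
  have := hI'.small
  obtain ⟨κ, _, hκ₀, hκ⟩ := exists_isCardinalPresentable_forall
    (Sum.elim (fun a : I => a.1.left) (Sum.elim (fun a : I => a.1.right)
      (fun a : I' => a.1.left))) κ₀
  have : IsCardinalLocallyPresentable M κ := IsCardinalLocallyPresentable.of_le M hκ₀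
  obtain ⟨μ, hμ, hcover⟩ := exists_cover I (fun a ha => hκ (Sum.inl ⟨a, ha⟩))
    (fun a ha => hκ (Sum.inr (Sum.inl ⟨a, ha⟩)))
  -- For this successor of a power, subsets of a `κ`-directed poset of size `< lam` are contained in
  -- `κ`-directed subsets of size `< lam`.
  obtain ⟨lam, hlam⟩ : ∃ lam : Cardinal.{v}, lam = Order.succ ((2 : Cardinal.{v}) ^ μ) := ⟨_, rfl⟩
  have hlt : μ < lam := hlam ▸ (Cardinal.cantor μ).trans (Order.lt_succ _)
  have hreg : lam.IsRegular := by
    rw [hlam]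
    exact Cardinal.isRegular_succ ((Fact.out : κ.IsRegular).aleph0_le.trans
      (hμ.trans (Cardinal.cantor μ).le))
  have : Fact lam.IsRegular := ⟨hreg⟩
  refine ⟨lam, hreg, fun X hX ι Y cf hcf f => ?_⟩
  have := (isCardinalPresentable_iff_mathlib X).1 hX
  obtain ⟨X', Q, p, ⟨r⟩, hp, _, hQ⟩ := hcover lam hlt.le
    (fun P _ _ => cofinalDirectedSub μ hμ hlam P) X
  rw [hI.rlp] at hp
  have : HomotopicalAlgebra.WeakEquivalence p :=
    (HomotopicalAlgebra.weakEquivalence_iff p).2 hp.1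
  have : HomotopicalAlgebra.IsCofibrant Q := (isCofibrant_iff_lift Q).2 (fun Z Z' g hg t =>
    hQ g (by rw [hI.rlp]; exact ⟨hg.2, hg.1⟩) t)
  obtain ⟨J, hJ, h⟩ := exists_factorization_cofan γ (fun K φ =>
    exists_factorization γ (hμ.trans hlt.le) I' (fun a ha => hκ (Sum.inr (Sum.inr ⟨a, ha⟩)))
      hI'.rlp r p K φ) hcf f
  exact ⟨J, by rwa [hasCardinalLT_iff_cardinal_mk_lt] at hJ, h⟩

end Paper
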